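/- For all x ∈ ℝ⁸ with ‖x‖ ≥ √2, the function b admits the representation b(x) = −4 sin²(π‖x‖²/2) ∫₀^{i∞} ψ_S(−1/z) z² e^{πi‖x‖²z} dz, where the integral is taken along the positive imaginary axis. In particular b(x) has (at least) a double zero at every x with ‖x‖² an even positive integer. -/

import Mathlib

/-!
Write `F(z) = ψ_S(-1/z) z²` and `k(z) = e^{πi‖x‖²z}`. The transformation laws of the theta-nullwerte
under `z ↦ -1/z` and `z ↦ z + 1` show that `F` is the closed-form function `psiI`, that its
translates `F(z ± 1)` are both `psiT`, and that `psiI = psiT + ψ_S`; the last identity is purely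
formal and does not use Jacobi's identity `θ₀₀⁴ = θ₀₁⁴ + θ₁₀⁴`.

The two vertical segments at `±1` and the segment from `0` to `i` contribute
`(k(1) + k(-1) - 2) ∫₀^i F k`, where `k(1) + k(-1) - 2 = -4 sin²(π‖x‖²/2)`. The two horizontal segments
are integrals of `psiT · k` at height `1`; Cauchy's theorem on the rectangles `[-1,0] × [1,R]` and
`[0,1] × [1,R]` (`horiz_one_eq`) moves them to height `R` at the cost of
`(k(1) + k(-1)) ∫_i^{iR} psiI k - 2 ∫_i^{iR} psiT k`. Substituting `psiT = psiI - ψ_S` gives the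
truncated representation `funB_eq_truncated`, and it remains to let `R → ∞`.

For `‖x‖² ≥ 2` the function `psiT · k` has a limit at `i∞`, because `psiT ∼ e^{-2πiz}`; the two
horizontal segments have opposite orientation, so their contributions cancel in the limit. When
`‖x‖² > 2` the integral on the right converges and the representation follows. When `‖x‖² = 2` that
integral diverges, hence has the value `0` by convention, but the scalar in front of it is `0` in
the truncated formula as well, so that `b(x) = 0`.

Only the region `Im z ≥ 1` enters, and there the theta series are dominated by their leading terms.
Hence the non-vanishing of the theta-nullwerte needs no product formula.
-/

open Complex

/-- The normalized weight-2 Eisenstein series `E₂` on the upper half-plane (constant term 1),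
given by its `q`-expansion `1 - 24 ∑ σ₁(n) qⁿ`, extended by the same formula to all of `ℂ`. -/
noncomputable def E₂ (z : ℂ) : ℂ :=
  1 - 24 * ∑' n : ℕ+, (ArithmeticFunction.sigma 1 (n : ℕ) : ℂ) *
    Complex.exp (2 * Real.pi * I * (n : ℕ) * z)

/-- The normalized weight-4 Eisenstein series `E₄` (constant term 1),
given by its `q`-expansion `1 + 240 ∑ σ₃(n) qⁿ`. -/
noncomputable def E₄ (z : ℂ) : ℂ :=
  1 + 240 * ∑' n : ℕ+, (ArithmeticFunction.sigma 3 (n : ℕ) : ℂ) *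
    Complex.exp (2 * Real.pi * I * (n : ℕ) * z)

/-- The normalized weight-6 Eisenstein series `E₆` (constant term 1),
given by its `q`-expansion `1 - 504 ∑ σ₅(n) qⁿ`. -/
noncomputable def E₆ (z : ℂ) : ℂ :=
  1 - 504 * ∑' n : ℕ+, (ArithmeticFunction.sigma 5 (n : ℕ) : ℂ) *
    Complex.exp (2 * Real.pi * I * (n : ℕ) * z)

/-- The modular discriminant `Δ = (E₄³ - E₆²) / 1728`. -/
noncomputable def Δ (z : ℂ) : ℂ := (E₄ z ^ 3 - E₆ z ^ 2) / 1728

/-- Viazovska's weakly holomorphic quasimodular form `φ₀ = (E₂E₄ - E₆)² / Δ`. -/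
noncomputable def φ₀ (z : ℂ) : ℂ := (E₂ z * E₄ z - E₆ z) ^ 2 / Δ z

/-- The Jacobi theta-nullwert `θ₀₀(z) = ∑_{n ∈ ℤ} e^{πin²z}`. -/
noncomputable def θ₀₀ (z : ℂ) : ℂ := ∑' n : ℤ, Complex.exp (Real.pi * I * (n : ℂ) ^ 2 * z)

/-- The Jacobi theta-nullwert `θ₀₁(z) = ∑_{n ∈ ℤ} (-1)ⁿ e^{πin²z}`. -/
noncomputable def θ₀₁ (z : ℂ) : ℂ :=
  ∑' n : ℤ, (-1 : ℂ) ^ n * Complex.exp (Real.pi * I * (n : ℂ) ^ 2 * z)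

/-- The Jacobi theta-nullwert `θ₁₀(z) = ∑_{n ∈ ℤ} e^{πi(n+1/2)²z}`. -/
noncomputable def θ₁₀ (z : ℂ) : ℂ :=
  ∑' n : ℤ, Complex.exp (Real.pi * I * ((n : ℂ) + 1 / 2) ^ 2 * z)

/-- Viazovska's modular form
`ψ_S = 128((θ₀₁⁴ - θ₁₀⁴)/θ₀₀⁸ - (θ₁₀⁴ + θ₀₀⁴)/θ₀₁⁸)`. -/
noncomputable def ψS (z : ℂ) : ℂ :=
  128 * ((θ₀₁ z ^ 4 - θ₁₀ z ^ 4) / θ₀₀ z ^ 8 - (θ₁₀ z ^ 4 + θ₀₀ z ^ 4) / θ₀₁ z ^ 8)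

open scoped Real

/-- The complex line integral of `f` along the straight segment from `w₁` to `w₂`. -/
noncomputable def segInt (f : ℂ → ℂ) (w₁ w₂ : ℂ) : ℂ :=
  (w₂ - w₁) * ∫ t in (0 : ℝ)..1, f (w₁ + (t : ℂ) * (w₂ - w₁))

/-- The complex line integral of `f` along the vertical ray on the imaginary axis
from `c * i` to `i∞`, parametrized as `t ↦ t * i`. -/
noncomputable def imAxisRayInt (f : ℂ → ℂ) (c : ℝ) : ℂ :=
  ∫ t in Set.Ioi c, f ((t : ℂ) * I) * I

/-- The Gaussian kernel `e^{πi‖x‖²z}` appearing in the integrands. -/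
noncomputable def ker (x : EuclideanSpace ℝ (Fin 8)) (z : ℂ) : ℂ :=
  Complex.exp (Real.pi * I * (‖x‖ : ℂ) ^ 2 * z)

/-- Viazovska's function `a : ℝ⁸ → ℂ`, defined by contour integrals of `φ₀`:
the first contour runs from `-1` vertically to `-1 + i` then horizontally to `i`, the second
from `1` vertically to `1 + i` then horizontally to `i`, the third along the imaginary axis
from `0` to `i`, and the fourth along the imaginary axis from `i` to `i∞`. -/
noncomputable def funA (x : EuclideanSpace ℝ (Fin 8)) : ℂ :=
  (segInt (fun z => φ₀ (-1 / (z + 1)) * (z + 1) ^ 2 * ker x z) (-1) (-1 + I) +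
    segInt (fun z => φ₀ (-1 / (z + 1)) * (z + 1) ^ 2 * ker x z) (-1 + I) I) +
  (segInt (fun z => φ₀ (-1 / (z - 1)) * (z - 1) ^ 2 * ker x z) 1 (1 + I) +
    segInt (fun z => φ₀ (-1 / (z - 1)) * (z - 1) ^ 2 * ker x z) (1 + I) I) -
  2 * segInt (fun z => φ₀ (-1 / z) * z ^ 2 * ker x z) 0 I +
  2 * imAxisRayInt (fun z => φ₀ z * ker x z) 1

/-- Viazovska's function `b : ℝ⁸ → ℂ`, defined by contour integrals of `ψ_S` along the same
contours as `funA`, with a minus sign on the ray from `i` to `i∞`. -/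
noncomputable def funB (x : EuclideanSpace ℝ (Fin 8)) : ℂ :=
  (segInt (fun z => ψS (-1 / (z + 1)) * (z + 1) ^ 2 * ker x z) (-1) (-1 + I) +
    segInt (fun z => ψS (-1 / (z + 1)) * (z + 1) ^ 2 * ker x z) (-1 + I) I) +
  (segInt (fun z => ψS (-1 / (z - 1)) * (z - 1) ^ 2 * ker x z) 1 (1 + I) +
    segInt (fun z => ψS (-1 / (z - 1)) * (z - 1) ^ 2 * ker x z) (1 + I) I) -
  2 * segInt (fun z => ψS (-1 / z) * z ^ 2 * ker x z) 0 I -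
  2 * imAxisRayInt (fun z => ψS z * ker x z) 1

/-! ### Theta-nullwerte: comparison with `jacobiTheta₂` and modular transformations -/

open Filter hiding ker
open Topology MeasureTheory

lemma theta00_eq (z : ℂ) : θ₀₀ z = jacobiTheta z := rfl

lemma theta00_eq₂ (z : ℂ) : θ₀₀ z = jacobiTheta₂ 0 z :=
  (theta00_eq z).trans (jacobiTheta_eq_jacobiTheta₂ z)

lemma neg_one_zpow_eq_exp (n : ℤ) : (-1 : ℂ) ^ n = cexp (π * I * n) := by
  rw [← Complex.exp_pi_mul_I, ← Complex.exp_int_mul]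
  ring_nf

lemma theta01_eq₂ (z : ℂ) : θ₀₁ z = jacobiTheta₂ (1 / 2) z := by
  refine tsum_congr fun n => ?_
  rw [jacobiTheta₂_term, neg_one_zpow_eq_exp, ← Complex.exp_add]
  ring_nf

lemma theta10_eq₂ (z : ℂ) : θ₁₀ z = cexp (π * I * z / 4) * jacobiTheta₂ (z / 2) z := by
  rw [θ₁₀, jacobiTheta₂, ← tsum_mul_left]
  refine tsum_congr fun n => ?_
  rw [jacobiTheta₂_term, ← Complex.exp_add]
  ring_nf

/-- `n² ≡ n (mod 2)`, in exponential form. -/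
lemma exp_pi_int_sq (n : ℤ) : cexp (π * I * (n : ℂ) ^ 2) = (-1 : ℂ) ^ n := by
  have h : cexp (π * I * (n : ℂ) ^ 2) = (-1 : ℂ) ^ (n ^ 2) := by
    rw [neg_one_zpow_eq_exp]; push_cast; rfl
  rw [h]
  rcases Int.even_or_odd n with hn | hn
  · rw [hn.neg_one_zpow, (hn.pow_of_ne_zero (by norm_num) : Even (n ^ 2)).neg_one_zpow]
  · rw [hn.neg_one_zpow, (hn.pow : Odd (n ^ 2)).neg_one_zpow]

lemma theta00_add_one (z : ℂ) : θ₀₀ (z + 1) = θ₀₁ z := by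
  refine tsum_congr fun n => ?_
  rw [← exp_pi_int_sq, ← Complex.exp_add]
  ring_nf

lemma theta01_add_one (z : ℂ) : θ₀₁ (z + 1) = θ₀₀ z := by
  refine tsum_congr fun n => ?_
  rw [mul_add, Complex.exp_add, mul_one, exp_pi_int_sq, mul_comm, mul_assoc, ← mul_zpow]
  simp

lemma theta10_add_one_pow (z : ℂ) : θ₁₀ (z + 1) ^ 4 = -θ₁₀ z ^ 4 := by
  have h : θ₁₀ (z + 1) = cexp (π * I / 4) * θ₁₀ z := by
    rw [θ₁₀, θ₁₀, ← tsum_mul_left]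
    refine tsum_congr fun n => ?_
    have e : (π * I * ((n : ℂ) + 1 / 2) ^ 2 * (z + 1) : ℂ) =
        π * I * (n : ℂ) ^ 2 + π * I * n + (π * I / 4 + π * I * ((n : ℂ) + 1 / 2) ^ 2 * z) := by
      ring
    rw [e, Complex.exp_add, Complex.exp_add, Complex.exp_add, exp_pi_int_sq,
      ← neg_one_zpow_eq_exp, ← mul_zpow]
    simp
  rw [h, mul_pow, ← Complex.exp_nat_mul]
  have : ((4 : ℕ) : ℂ) * (π * I / 4) = π * I := by push_cast; ring
  rw [this, Complex.exp_pi_mul_I]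
  ring

/-- The fourth power of the automorphy factor in `jacobiTheta₂_functional_equation`. -/
lemma one_div_cpow_half_pow_four (w : ℂ) : (1 / w ^ (1 / 2 : ℂ)) ^ 4 = 1 / w ^ 2 := by
  rw [div_pow, one_pow, ← Complex.cpow_nat_mul]
  have : ((4 : ℕ) : ℂ) * (1 / 2) = ((2 : ℕ) : ℂ) := by norm_num
  rw [this, Complex.cpow_natCast]

lemma im_neg_one_div_pos {z : ℂ} (hz : 0 < z.im) : 0 < (-1 / z).im := by
  have h : z ≠ 0 := by rintro rfl; simp at hz
  rw [neg_div, neg_im, one_div, inv_im, neg_div, neg_neg]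
  exact div_pos hz (Complex.normSq_pos.mpr h)

lemma theta00_S_pow {z : ℂ} (hz : 0 < z.im) : θ₀₀ (-1 / z) ^ 4 = -z ^ 2 * θ₀₀ z ^ 4 := by
  have h := jacobiTheta₂_functional_equation 0 z
  have hz0 : z ≠ 0 := by rintro rfl; simp at hz
  rw [theta00_eq₂, theta00_eq₂, h]
  simp only [zero_div, mul_pow, one_div_cpow_half_pow_four]
  simp only [ne_eq, OfNat.ofNat_ne_zero, not_false_eq_true, zero_pow, mul_zero, zero_div,
    Complex.exp_zero, one_pow, neg_mul, mul_one]
  field_simp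
  simp

lemma theta10_S_pow {z : ℂ} (hz : 0 < z.im) : θ₁₀ (-1 / z) ^ 4 = -z ^ 2 * θ₀₁ z ^ 4 := by
  have h := jacobiTheta₂_functional_equation (1 / 2) z
  have hz0 : z ≠ 0 := by rintro rfl; simp at hz
  have e1 : -1 / z / 2 = -(1 / 2 / z) := by ring
  have e2 : (π * I * (-1 / z) / 4 : ℂ) = -π * I * (1 / 2) ^ 2 / z := by ring
  rw [theta10_eq₂, theta01_eq₂, h, e1, jacobiTheta₂_neg_left, e2]
  simp only [mul_pow, one_div_cpow_half_pow_four]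
  field_simp
  simp

lemma theta01_S_pow {z : ℂ} (hz : 0 < z.im) : θ₀₁ (-1 / z) ^ 4 = -z ^ 2 * θ₁₀ z ^ 4 := by
  have h := theta10_S_pow (im_neg_one_div_pos hz)
  have hz0 : z ≠ 0 := by rintro rfl; simp at hz
  have e : -1 / (-1 / z) = z := by field_simp
  rw [e] at h
  rw [h]
  field_simp

/-! ### The three weight `-2` forms -/

/-- `ψ_I = ψ_S|S`, in closed form. -/
noncomputable def psiI (z : ℂ) : ℂ :=
  128 * ((θ₀₁ z ^ 4 - θ₁₀ z ^ 4) / θ₀₀ z ^ 8 + (θ₀₁ z ^ 4 + θ₀₀ z ^ 4) / θ₁₀ z ^ 8)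

/-- `ψ_T = ψ_I|T`, in closed form. -/
noncomputable def psiT (z : ℂ) : ℂ :=
  128 * ((θ₁₀ z ^ 4 + θ₀₀ z ^ 4) / θ₀₁ z ^ 8 + (θ₀₁ z ^ 4 + θ₀₀ z ^ 4) / θ₁₀ z ^ 8)

lemma psiI_eq (z : ℂ) : psiI z = psiT z + ψS z := by
  simp only [psiI, psiT, ψS]; ring

lemma psiS_S {z : ℂ} (hz : 0 < z.im) : ψS (-1 / z) * z ^ 2 = psiI z := by
  have hz0 : z ≠ 0 := by rintro rfl; simp at hz
  have p8 (w : ℂ) : w ^ 8 = (w ^ 4) ^ 2 := by ring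
  simp only [psiI, ψS, p8, theta00_S_pow hz, theta10_S_pow hz, theta01_S_pow hz]
  have key (a b : ℂ) : (-z ^ 2 * a) / (-z ^ 2 * b) ^ 2 * z ^ 2 = -(a / b ^ 2) := by
    by_cases hb : b = 0
    · simp [hb]
    · field_simp
  have k1 := key (θ₁₀ z ^ 4 - θ₀₁ z ^ 4) (θ₀₀ z ^ 4)
  have k2 := key (θ₀₁ z ^ 4 + θ₀₀ z ^ 4) (θ₁₀ z ^ 4)
  linear_combination 128 * k1 - 128 * k2

lemma psiI_add_one (z : ℂ) : psiI (z + 1) = psiT z := by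
  have p8 (w : ℂ) : w ^ 8 = (w ^ 4) ^ 2 := by ring
  simp only [psiI, psiT, p8, theta00_add_one, theta01_add_one, theta10_add_one_pow]
  ring

lemma psiT_add_one (z : ℂ) : psiT (z + 1) = psiI z := by
  have p8 (w : ℂ) : w ^ 8 = (w ^ 4) ^ 2 := by ring
  simp only [psiI, psiT, p8, theta00_add_one, theta01_add_one, theta10_add_one_pow]
  ring

lemma psiI_sub_one (z : ℂ) : psiI (z - 1) = psiT z := by
  rw [← psiT_add_one, sub_add_cancel]

/-! ### Behaviour of the theta-nullwerte high in the half-plane -/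

/-- Pairing `n` with `-(n+1)` in the series for `θ₁₀`. -/
lemma theta10_eq_tsum_nat {z : ℂ} (hz : 0 < z.im) :
    θ₁₀ z = cexp (π * I * z / 4) * (2 * ∑' n : ℕ, cexp (π * I * (n * (n + 1)) * z)) ∧
      Summable (fun n : ℕ => cexp (π * I * ((n : ℂ) * (n + 1)) * z)) := by
  have hs := hasSum_jacobiTheta₂_term (z / 2) hz
  have e (n : ℤ) : jacobiTheta₂_term n (z / 2) z = cexp (π * I * ((n : ℂ) * (n + 1)) * z) := by
    rw [jacobiTheta₂_term]; ring_nf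
  simp only [e] at hs
  have hs1 : Summable (fun n : ℕ => cexp (π * I * ((n : ℂ) * (n + 1)) * z)) := by
    simpa [Function.comp_def] using
      hs.summable.comp_injective (i := ((↑) : ℕ → ℤ)) Nat.cast_injective
  refine ⟨?_, hs1⟩
  have h2 := HasSum.of_nat_of_neg_add_one
    (f := fun n : ℤ => cexp (π * I * ((n : ℂ) * (n + 1)) * z))
    (by simpa using hs1.hasSum) (m' := ∑' n : ℕ, cexp (π * I * (n * (n + 1)) * z)) (by
      convert hs1.hasSum using 3 with n
      push_cast
      ring)
  rw [theta10_eq₂, hs.unique h2]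
  ring

lemma norm_theta10_series_sub_one_le {z : ℂ} (hz : 0 < z.im) :
    ‖∑' n : ℕ, cexp (π * I * (n * (n + 1)) * z) - 1‖ ≤
      Real.exp (-π * z.im) / (1 - Real.exp (-π * z.im)) := by
  have hr0 : 0 ≤ Real.exp (-π * z.im) := (Real.exp_pos _).le
  have hr1 : Real.exp (-π * z.im) < 1 := by
    rw [Real.exp_lt_one_iff]; nlinarith [Real.pi_pos]
  have hs := (theta10_eq_tsum_nat hz).2
  rw [hs.tsum_eq_zero_add]
  have hg := (hasSum_geometric_of_lt_one hr0 hr1).mul_left (Real.exp (-π * z.im))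
  rw [← div_eq_mul_inv] at hg
  simp only [Nat.cast_zero, zero_mul, mul_zero, Complex.exp_zero, add_sub_cancel_left]
  refine tsum_of_norm_bounded hg fun n => ?_
  rw [Complex.norm_exp, ← Real.exp_nat_mul, ← Real.exp_add, Real.exp_le_exp]
  have : (π * I * (((n + 1 : ℕ) : ℂ) * (((n + 1 : ℕ) : ℂ) + 1)) * z).re =
      -π * ((n + 1) * (n + 2)) * z.im := by
    have : (π * I * (((n + 1 : ℕ) : ℂ) * (((n + 1 : ℕ) : ℂ) + 1)) * z) =
      ((π * ((n + 1) * (n + 2)) : ℝ) : ℂ) * (I * z) := by push_cast; ring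
    rw [this, Complex.re_ofReal_mul]
    simp
  rw [this]
  have h3 : 0 < π * z.im := by positivity
  have : 0 ≤ (n : ℝ) := by positivity
  nlinarith [mul_nonneg h3.le this, mul_nonneg h3.le (mul_nonneg this this)]

lemma exp_neg_pi_mul_le {y : ℝ} (hy : 1 ≤ y) : Real.exp (-π * y) ≤ 1 / 4 := by
  have h1 : Real.exp (-π * y) ≤ Real.exp (-3) := by
    rw [Real.exp_le_exp]; nlinarith [Real.pi_gt_three]
  have h2 : (4 : ℝ) ≤ Real.exp 3 := by linarith [Real.add_one_le_exp (3 : ℝ)]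
  rw [Real.exp_neg] at h1
  exact h1.trans (by rw [one_div]; exact inv_anti₀ (by norm_num) h2)

lemma theta00_ne_zero {z : ℂ} (hz : 1 ≤ z.im) : θ₀₀ z ≠ 0 := by
  intro h0
  have h := norm_jacobiTheta_sub_one_le (zero_lt_one.trans_le hz)
  rw [← theta00_eq, h0, zero_sub, norm_neg, norm_one] at h
  have hq := exp_neg_pi_mul_le hz
  have hp : 0 < 1 - Real.exp (-π * z.im) := by linarith
  rw [div_mul_eq_mul_div, le_div_iff₀ hp] at h
  linarith

lemma theta01_ne_zero {z : ℂ} (hz : 1 ≤ z.im) : θ₀₁ z ≠ 0 := by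
  rw [← theta00_add_one]
  exact theta00_ne_zero (by simpa using hz)

lemma theta10_ne_zero {z : ℂ} (hz : 1 ≤ z.im) : θ₁₀ z ≠ 0 := by
  have hz0 := zero_lt_one.trans_le hz
  rw [(theta10_eq_tsum_nat hz0).1]
  refine mul_ne_zero (Complex.exp_ne_zero _) (mul_ne_zero two_ne_zero fun h0 => ?_)
  have h := norm_theta10_series_sub_one_le hz0
  rw [h0, zero_sub, norm_neg, norm_one] at h
  have hq := exp_neg_pi_mul_le hz
  have hp : 0 < 1 - Real.exp (-π * z.im) := by linarith
  rw [le_div_iff₀ hp] at h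
  linarith

lemma theta00_differentiableAt {z : ℂ} (hz : 0 < z.im) : DifferentiableAt ℂ θ₀₀ z :=
  differentiableAt_jacobiTheta hz

lemma theta01_differentiableAt {z : ℂ} (hz : 0 < z.im) : DifferentiableAt ℂ θ₀₁ z := by
  rw [funext theta01_eq₂]
  exact differentiableAt_jacobiTheta₂_snd _ hz

lemma theta10_differentiableAt {z : ℂ} (hz : 0 < z.im) : DifferentiableAt ℂ θ₁₀ z := by
  rw [funext theta10_eq₂]
  refine DifferentiableAt.mul (by fun_prop) ?_
  exact (hasFDerivAt_jacobiTheta₂ (z / 2) hz).differentiableAt.comp z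
    (f := fun w : ℂ => (w / 2, w)) (by fun_prop)

lemma psiT_differentiableAt {z : ℂ} (hz : 1 ≤ z.im) : DifferentiableAt ℂ psiT z := by
  have hz0 := zero_lt_one.trans_le hz
  have h0 := theta00_differentiableAt hz0
  have h1 := theta01_differentiableAt hz0
  have h2 := theta10_differentiableAt hz0
  unfold psiT
  exact ((((h2.pow 4).add (h0.pow 4)).div (h1.pow 8) (pow_ne_zero _ (theta01_ne_zero hz))).add
    (((h1.pow 4).add (h0.pow 4)).div (h2.pow 8) (pow_ne_zero _ (theta10_ne_zero hz)))).const_mul _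

lemma psiS_differentiableAt {z : ℂ} (hz : 1 ≤ z.im) : DifferentiableAt ℂ ψS z := by
  have hz0 := zero_lt_one.trans_le hz
  have h0 := theta00_differentiableAt hz0
  have h1 := theta01_differentiableAt hz0
  have h2 := theta10_differentiableAt hz0
  unfold ψS
  exact ((((h1.pow 4).sub (h2.pow 4)).div (h0.pow 8) (pow_ne_zero _ (theta00_ne_zero hz))).sub
    (((h2.pow 4).add (h0.pow 4)).div (h1.pow 8) (pow_ne_zero _ (theta01_ne_zero hz)))).const_mul _

lemma psiI_differentiableAt {z : ℂ} (hz : 1 ≤ z.im) : DifferentiableAt ℂ psiI z := by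
  rw [funext psiI_eq]
  exact (psiT_differentiableAt hz).add (psiS_differentiableAt hz)

/-- The neighbourhoods of `i∞`. -/
local notation "atImInf" => comap Complex.im atTop

lemma tendsto_exp_mul_im {c : ℝ} (hc : 0 < c) :
    Tendsto (fun z : ℂ => Real.exp (-c * z.im)) atImInf (𝓝 0) := by
  refine Real.tendsto_exp_atBot.comp ?_
  exact (tendsto_const_nhds (x := -c)).neg_mul_atTop (by linarith) tendsto_comap

lemma tendsto_cexp_mul_I {c : ℝ} (hc : 0 < c) :
    Tendsto (fun z : ℂ => cexp (c * I * z)) atImInf (𝓝 0) := by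
  rw [tendsto_zero_iff_norm_tendsto_zero]
  refine (tendsto_exp_mul_im hc).congr fun z => ?_
  rw [Complex.norm_exp, mul_assoc, Complex.re_ofReal_mul]
  simp

lemma tendsto_theta00 : Tendsto θ₀₀ atImInf (𝓝 1) := by
  have h := isBigO_at_im_infty_jacobiTheta_sub_one.trans_tendsto (tendsto_exp_mul_im Real.pi_pos)
  simpa [← theta00_eq] using h.add_const 1

lemma tendsto_theta01 : Tendsto θ₀₁ atImInf (𝓝 1) := by
  have : Tendsto (fun z : ℂ => z + 1) atImInf atImInf :=
    tendsto_comap_iff.mpr (by simpa [Function.comp_def] using tendsto_comap)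
  simpa [Function.comp_def, theta00_add_one] using tendsto_theta00.comp this

/-- The leading behaviour `θ₁₀ z ∼ 2 e^{πiz/4}`. -/
lemma tendsto_theta10_mul_exp :
    Tendsto (fun z => θ₁₀ z * cexp (-(π * I * z / 4))) atImInf (𝓝 2) := by
  have hser : Tendsto (fun z : ℂ => ∑' n : ℕ, cexp (π * I * (n * (n + 1)) * z)) atImInf (𝓝 1) := by
    rw [tendsto_iff_norm_sub_tendsto_zero]
    have hb := (tendsto_exp_mul_im Real.pi_pos).div
      ((tendsto_exp_mul_im Real.pi_pos).const_sub 1) (by norm_num)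
    simp only [sub_zero, div_one] at hb
    refine squeeze_zero' (Eventually.of_forall fun _ => norm_nonneg _) ?_ hb
    filter_upwards [tendsto_comap.eventually (eventually_gt_atTop (0 : ℝ))] with z hz
    exact norm_theta10_series_sub_one_le hz
  have h2 := hser.const_mul 2
  rw [mul_one] at h2
  refine h2.congr' ?_
  filter_upwards [tendsto_comap.eventually (eventually_gt_atTop (0 : ℝ))] with z hz
  rw [(theta10_eq_tsum_nat hz).1, mul_right_comm, ← Complex.exp_add, add_neg_cancel,
    Complex.exp_zero, one_mul]

lemma tendsto_theta10 : Tendsto θ₁₀ atImInf (𝓝 0) := by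
  have h := tendsto_theta10_mul_exp.mul (tendsto_cexp_mul_I (c := π / 4) (by positivity))
  rw [mul_zero] at h
  refine h.congr fun z => ?_
  rw [mul_assoc, ← Complex.exp_add]
  have : (-(π * I * z / 4) + ((π / 4 : ℝ) : ℂ) * I * z : ℂ) = 0 := by push_cast; ring
  rw [this, Complex.exp_zero, mul_one]

/-- `ψ_S` vanishes at `i∞`: the constant terms of its two quotients cancel. -/
lemma tendsto_psiS : Tendsto ψS atImInf (𝓝 0) := by
  have h0 := tendsto_theta00
  have h1 := tendsto_theta01
  have h2 := tendsto_theta10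
  have h := ((((h1.pow 4).sub (h2.pow 4)).div (h0.pow 8) (by norm_num)).sub
    (((h2.pow 4).add (h0.pow 4)).div (h1.pow 8) (by norm_num))).const_mul 128
  norm_num at h
  exact h

/-- `ψ_T` has a simple pole in `q = e^{2πiz}` at `i∞`, with leading coefficient `1`. -/
lemma tendsto_psiT_mul_exp :
    Tendsto (fun z => psiT z * cexp (2 * π * I * z)) atImInf (𝓝 1) := by
  have h0 := tendsto_theta00
  have h1 := tendsto_theta01
  have h2 := tendsto_theta10
  have h3 := tendsto_theta10_mul_exp
  have hq := tendsto_cexp_mul_I (c := 2 * π) (by positivity)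
  have h := (((((h2.pow 4).add (h0.pow 4)).div (h1.pow 8) (by norm_num)).mul hq).add
    (((h1.pow 4).add (h0.pow 4)).div (h3.pow 8) (by norm_num))).const_mul 128
  norm_num at h
  refine h.congr fun z => ?_
  have e : cexp (-(π * I * z / 4)) ^ 8 = (cexp (2 * π * I * z))⁻¹ := by
    rw [← Complex.exp_nat_mul, ← Complex.exp_neg]
    push_cast
    ring_nf
  rw [mul_pow, e, psiT, ← div_eq_mul_inv, div_div_eq_mul_div]
  ring

/-- The limit `L` is `1` for `s = 2` and `0` for `s > 2`; only its existence matters, because the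
two horizontal segments contribute `L` with opposite signs. -/
lemma exists_tendsto_psiT_mul_exp {s : ℝ} (hs : 2 ≤ s) :
    ∃ L : ℂ, Tendsto (fun z => psiT z * cexp (π * I * s * z)) atImInf (𝓝 L) := by
  rcases hs.eq_or_lt with rfl | hs
  · refine ⟨1, tendsto_psiT_mul_exp.congr fun z => ?_⟩
    push_cast
    ring_nf
  · have h := tendsto_psiT_mul_exp.mul
      (tendsto_cexp_mul_I (c := π * (s - 2)) (mul_pos Real.pi_pos (by linarith)))
    refine ⟨_, h.congr fun z => ?_⟩
    rw [mul_assoc, ← Complex.exp_add]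
    push_cast
    ring_nf

/-! ### Integrals along the imaginary axis and along horizontal segments -/

lemma tendsto_mul_I_atImInf : Tendsto (fun t : ℝ => (t : ℂ) * I) atTop atImInf :=
  tendsto_comap_iff.mpr (tendsto_id.congr fun t => by simp)

lemma continuousOn_comp_mul_I {f : ℂ → ℂ} (hf : ∀ z : ℂ, 1 ≤ z.im → DifferentiableAt ℂ f z) :
    ContinuousOn (fun t : ℝ => f (t * I)) (Set.Ici 1) := by
  intro t ht
  refine ContinuousAt.continuousWithinAt ?_
  exact ContinuousAt.comp (f := fun t : ℝ => (t : ℂ) * I)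
    (hf _ (by simpa using ht)).continuousAt (by fun_prop)

lemma exists_bound_of_tendsto {f : ℂ → ℂ} {L : ℂ}
    (hf : ∀ z : ℂ, 1 ≤ z.im → DifferentiableAt ℂ f z) (hL : Tendsto f atImInf (𝓝 L)) :
    ∃ C, ∀ t : ℝ, 1 ≤ t → ‖f (t * I)‖ ≤ C := by
  have hlim := (hL.comp tendsto_mul_I_atImInf).norm
  obtain ⟨R, hR⟩ := eventually_atTop.mp (hlim.eventually_le_const (lt_add_one ‖L‖))
  obtain ⟨C, hC⟩ := (isCompact_Icc (a := (1 : ℝ)) (b := R)).exists_bound_of_continuousOn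
    ((continuousOn_comp_mul_I hf).mono Set.Icc_subset_Ici_self)
  refine ⟨max C (‖L‖ + 1), fun t ht => ?_⟩
  rcases le_total t R with h | h
  · exact (hC t ⟨ht, h⟩).trans (le_max_left _ _)
  · exact (hR t h).trans (le_max_right _ _)

lemma integrableOn_mul_exp_of_tendsto {f : ℂ → ℂ} {L : ℂ} {c : ℝ} (hc : 0 < c)
    (hf : ∀ z : ℂ, 1 ≤ z.im → DifferentiableAt ℂ f z) (hL : Tendsto f atImInf (𝓝 L)) :
    IntegrableOn (fun t : ℝ => f (t * I) * cexp (-(c * t)) * I) (Set.Ioi 1) := by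
  obtain ⟨C, hC⟩ := exists_bound_of_tendsto hf hL
  have hg : IntegrableOn (fun t : ℝ => C * Real.exp (-c * t)) (Set.Ioi 1) :=
    (exp_neg_integrableOn_Ioi 1 hc).const_mul C
  refine hg.mono' ?_ ?_
  · refine ContinuousOn.aestronglyMeasurable ?_ measurableSet_Ioi
    refine ContinuousOn.mul (ContinuousOn.mul ?_ (by fun_prop)) continuousOn_const
    exact (continuousOn_comp_mul_I hf).mono Set.Ioi_subset_Ici_self
  · refine (ae_restrict_iff' measurableSet_Ioi).mpr (Eventually.of_forall fun t ht => ?_)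
    have e : ‖cexp (-(c * t))‖ = Real.exp (-c * t) := by
      rw [Complex.norm_exp, ← Complex.ofReal_mul, ← Complex.ofReal_neg, Complex.ofReal_re, neg_mul]
    rw [norm_mul, norm_mul, Complex.norm_I, mul_one, e]
    exact mul_le_mul_of_nonneg_right (hC t (le_of_lt ht)) (Real.exp_pos _).le

/-- Integrals over horizontal segments at height `R → ∞` are governed by the limit at `i∞`. -/
lemma tendsto_horizontal {g : ℂ → ℂ} {L : ℂ} (a b : ℝ)
    (hg : ∀ z : ℂ, 1 ≤ z.im → DifferentiableAt ℂ g z) (hL : Tendsto g atImInf (𝓝 L)) :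
    Tendsto (fun R : ℝ => ∫ u in a..b, g (u + R * I)) atTop (𝓝 ((b - a) * L)) := by
  have h : Tendsto (fun R : ℝ => ∫ u in a..b, g (u + R * I)) atTop (𝓝 (∫ _ in a..b, L)) := by
    refine TendstoUniformlyOn.tendsto_intervalIntegral_of_continuousOn ?_ ?_
    · filter_upwards [eventually_ge_atTop (1 : ℝ)] with R hR u _
      refine ContinuousAt.continuousWithinAt ?_
      exact ContinuousAt.comp (f := fun u : ℝ => (u : ℂ) + R * I)
        (hg _ (by simpa using hR)).continuousAt (by fun_prop)
    · rw [Metric.tendstoUniformlyOn_iff]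
      intro ε hε
      have h1 := hL.eventually (Metric.ball_mem_nhds L hε)
      rw [eventually_comap] at h1
      filter_upwards [h1] with R hR u _
      rw [dist_comm]
      exact hR _ (by simp)
  simpa [intervalIntegral.integral_const] using h

/-! ### The kernel -/

lemma ker_add (x : EuclideanSpace ℝ (Fin 8)) (z w : ℂ) : ker x (z + w) = ker x z * ker x w := by
  rw [ker, ker, ker, ← Complex.exp_add]; ring_nf

lemma ker_differentiable (x : EuclideanSpace ℝ (Fin 8)) : Differentiable ℂ (ker x) := by
  unfold ker; fun_prop

lemma ker_mul_I (x : EuclideanSpace ℝ (Fin 8)) (t : ℝ) :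
    ker x (t * I) = cexp (-((π * ‖x‖ ^ 2 : ℝ) * t)) := by
  rw [ker]
  congr 1
  push_cast
  linear_combination (π * (‖x‖ : ℂ) ^ 2 * t) * Complex.I_mul_I

lemma norm_ker_mul_I_le (x : EuclideanSpace ℝ (Fin 8)) {t : ℝ} (ht : 0 ≤ t) :
    ‖ker x (t * I)‖ ≤ 1 := by
  rw [ker_mul_I, ← Complex.ofReal_mul, ← Complex.ofReal_neg, Complex.norm_exp, Complex.ofReal_re,
    Real.exp_le_one_iff]
  have : 0 ≤ π * ‖x‖ ^ 2 * t := by positivity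
  linarith

/-- The scalar that arises from the shifts by `±1` of the contours. -/
lemma ker_one_add_ker_neg_one (x : EuclideanSpace ℝ (Fin 8)) :
    ker x 1 + ker x (-1) - 2 = -4 * (Real.sin (Real.pi * ‖x‖ ^ 2 / 2) : ℂ) ^ 2 := by
  have h1 : ker x 1 = cexp (((π * ‖x‖ ^ 2 / 2 : ℝ) : ℂ) * I) ^ 2 := by
    rw [ker, ← Complex.exp_nat_mul]; push_cast; ring_nf
  have h2 : ker x (-1) = cexp (-((π * ‖x‖ ^ 2 / 2 : ℝ) : ℂ) * I) ^ 2 := by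
    rw [ker, ← Complex.exp_nat_mul]; push_cast; ring_nf
  have h3 : cexp (((π * ‖x‖ ^ 2 / 2 : ℝ) : ℂ) * I) * cexp (-((π * ‖x‖ ^ 2 / 2 : ℝ) : ℂ) * I)
      = 1 := by
    rw [← Complex.exp_add]; simp
  rw [h1, h2, Complex.ofReal_sin, Complex.sin]
  linear_combination 2 * h3 + (cexp (-((π * ‖x‖ ^ 2 / 2 : ℝ) : ℂ) * I) -
    cexp (((π * ‖x‖ ^ 2 / 2 : ℝ) : ℂ) * I)) ^ 2 * Complex.I_sq

/-! ### Integrability on the imaginary axis -/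

lemma integrableOn_psiS_ker {x : EuclideanSpace ℝ (Fin 8)} (hx : 2 ≤ ‖x‖ ^ 2) :
    IntegrableOn (fun t : ℝ => ψS (t * I) * ker x (t * I) * I) (Set.Ioi 1) := by
  simp only [ker_mul_I]
  exact integrableOn_mul_exp_of_tendsto (mul_pos Real.pi_pos (by linarith))
    (fun z => psiS_differentiableAt) tendsto_psiS

lemma integrableOn_psiI_ker {x : EuclideanSpace ℝ (Fin 8)} (hx : 2 < ‖x‖ ^ 2) :
    IntegrableOn (fun t : ℝ => psiI (t * I) * ker x (t * I) * I) (Set.Ioi 1) := by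
  have hL : Tendsto (fun z => psiI z * cexp (2 * π * I * z)) atImInf (𝓝 1) := by
    have hq := tendsto_cexp_mul_I (c := 2 * π) (by positivity)
    have h := tendsto_psiT_mul_exp.add (tendsto_psiS.mul hq)
    rw [mul_zero, add_zero] at h
    refine h.congr fun z => ?_
    rw [psiI_eq, add_mul]
    push_cast
    rfl
  have hd (z : ℂ) (hz : 1 ≤ z.im) :
      DifferentiableAt ℂ (fun z => psiI z * cexp (2 * π * I * z)) z :=
    (psiI_differentiableAt hz).mul (by fun_prop)
  refine (integrableOn_mul_exp_of_tendsto (c := π * (‖x‖ ^ 2 - 2))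
    (mul_pos Real.pi_pos (by linarith)) hd hL).congr_fun (fun t _ => ?_) measurableSet_Ioi
  simp only [ker_mul_I]
  rw [mul_assoc (psiI _), ← Complex.exp_add]
  congr 3
  push_cast
  linear_combination (2 * π * t : ℂ) * Complex.I_mul_I

/-- Near `0` the integrand is controlled by the boundedness of `ψ_S` near `i∞`. -/
lemma integrableOn_near_zero (x : EuclideanSpace ℝ (Fin 8)) :
    IntegrableOn (fun t : ℝ => ψS (-1 / (t * I)) * (t * I) ^ 2 * ker x (t * I) * I)
      (Set.Ioc 0 1) := by
  obtain ⟨C, hC⟩ := exists_bound_of_tendsto (fun z => psiS_differentiableAt) tendsto_psiS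
  have e (t : ℝ) : -1 / ((t : ℂ) * I) = ((t⁻¹ : ℝ) : ℂ) * I := by
    rw [div_mul_eq_div_div, Complex.div_I, Complex.ofReal_inv]; ring
  have hinv {t : ℝ} (ht : t ∈ Set.Ioc (0 : ℝ) 1) : 1 ≤ t⁻¹ := (one_le_inv₀ ht.1).mpr ht.2
  simp only [e]
  refine IntegrableOn.of_bound measure_Ioc_lt_top ?_ C ?_
  · refine ContinuousOn.aestronglyMeasurable ?_ measurableSet_Ioc
    have h1 : ContinuousOn (fun t : ℝ => ψS (((t⁻¹ : ℝ) : ℂ) * I)) (Set.Ioc 0 1) :=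
      (continuousOn_comp_mul_I (fun z => psiS_differentiableAt)).comp
        (continuousOn_inv₀.mono fun t ht => ht.1.ne') fun t ht => hinv ht
    have h2 := (ker_differentiable x).continuous
    exact ((h1.mul (by fun_prop)).mul (by fun_prop)).mul continuousOn_const
  · refine (ae_restrict_iff' measurableSet_Ioc).mpr (Eventually.of_forall fun t ht => ?_)
    have hC' := hC _ (hinv ht)
    have ht2 : ‖((t : ℂ) * I) ^ 2‖ ≤ 1 := by
      rw [norm_pow, norm_mul, Complex.norm_I, mul_one, Complex.norm_real, Real.norm_of_nonneg ht.1.le]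
      exact pow_le_one₀ ht.1.le ht.2
    rw [norm_mul, Complex.norm_I, mul_one, norm_mul, norm_mul]
    have hC0 := (norm_nonneg _).trans hC'
    calc _ ≤ C * 1 * 1 := by gcongr; exact norm_ker_mul_I_le x ht.1.le
      _ = C := by ring

/-! ### Deformation of the contours -/

/-- The contribution of the two horizontal segments at height `R`. -/
noncomputable def horiz (x : EuclideanSpace ℝ (Fin 8)) (R : ℝ) : ℂ :=
  (∫ u in (-1 : ℝ)..0, psiT (u + R * I) * ker x (u + R * I)) -
    ∫ u in (0 : ℝ)..1, psiT (u + R * I) * ker x (u + R * I)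

lemma psiT_ker_differentiableAt (x : EuclideanSpace ℝ (Fin 8)) {z : ℂ} (hz : 1 ≤ z.im) :
    DifferentiableAt ℂ (fun z => psiT z * ker x z) z :=
  (psiT_differentiableAt hz).mul (ker_differentiable x z)

/-- The two horizontal segments are traversed in opposite directions, so that their
contributions cancel in the limit, including when `ψ_T(z) e^{πi‖x‖²z}` tends to `1`. -/
lemma tendsto_horiz {x : EuclideanSpace ℝ (Fin 8)} (hx : 2 ≤ ‖x‖ ^ 2) :
    Tendsto (horiz x) atTop (𝓝 0) := by
  obtain ⟨L, hL⟩ := exists_tendsto_psiT_mul_exp hx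
  have hL' : Tendsto (fun z => psiT z * ker x z) atImInf (𝓝 L) := by
    simpa [ker] using hL
  have h := (tendsto_horizontal (-1) 0 (fun z => psiT_ker_differentiableAt x) hL').sub
    (tendsto_horizontal 0 1 (fun z => psiT_ker_differentiableAt x) hL')
  simp at h
  exact h

/-- Cauchy's theorem on the rectangles `[-1,0] × [1,R]` and `[0,1] × [1,R]`. -/
lemma horiz_one_eq (x : EuclideanSpace ℝ (Fin 8)) {R : ℝ} (hR : 1 ≤ R) :
    horiz x 1 = horiz x R +
      (ker x 1 + ker x (-1)) * (∫ t in (1 : ℝ)..R, psiI (t * I) * ker x (t * I) * I) -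
      2 * ∫ t in (1 : ℝ)..R, psiT (t * I) * ker x (t * I) * I := by
  have hd (a b : ℝ) : DifferentiableOn ℂ (fun z => psiT z * ker x z)
      (Set.uIcc a b ×ℂ Set.uIcc 1 R) := fun z hz => by
    refine (psiT_ker_differentiableAt x ?_).differentiableWithinAt
    have := (Complex.mem_reProdIm.mp hz).2
    rw [Set.uIcc_of_le hR] at this
    exact this.1
  have hl := Complex.integral_boundary_rect_eq_zero_of_differentiableOn
    (fun z => psiT z * ker x z) (-1 + I) (R * I) (by simpa using hd (-1) 0)
  have hr := Complex.integral_boundary_rect_eq_zero_of_differentiableOn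
    (fun z => psiT z * ker x z) I (1 + R * I) (by simpa using hd 0 1)
  have e1 (y : ℝ) : psiT (1 + y * I) * ker x (1 + y * I) =
      ker x 1 * (psiI (y * I) * ker x (y * I)) := by
    rw [ker_add, add_comm, psiT_add_one]; ring
  have e2 (y : ℝ) : psiT (-1 + y * I) * ker x (-1 + y * I) =
      ker x (-1) * (psiI (y * I) * ker x (y * I)) := by
    rw [ker_add, ← psiI_add_one]; ring_nf
  simp [e1, e2] at hl hr
  simp only [horiz, intervalIntegral.integral_mul_const, Complex.ofReal_one, one_mul]
  linear_combination hl - hr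

lemma funB_eq_horiz (x : EuclideanSpace ℝ (Fin 8)) :
    funB x = (ker x 1 + ker x (-1) - 2) *
        (∫ t in (0 : ℝ)..1, ψS (-1 / (t * I)) * (t * I) ^ 2 * ker x (t * I) * I) +
      horiz x 1 - 2 * ∫ t in Set.Ioi (1 : ℝ), ψS (t * I) * ker x (t * I) * I := by
  have s1 : segInt (fun z => ψS (-1 / (z + 1)) * (z + 1) ^ 2 * ker x z) (-1) (-1 + I) =
      ker x (-1) *
        ∫ t in (0 : ℝ)..1, ψS (-1 / (t * I)) * (t * I) ^ 2 * ker x (t * I) * I := by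
    rw [segInt, ← intervalIntegral.integral_const_mul, ← intervalIntegral.integral_const_mul]
    congr 1
    funext t
    have e1 : (-1 : ℂ) + t * (-1 + I - -1) = -1 + t * I := by ring
    have e2 : (-1 : ℂ) + t * I + 1 = t * I := by ring
    rw [e1, e2, ker_add]
    ring
  have s2 : segInt (fun z => ψS (-1 / (z - 1)) * (z - 1) ^ 2 * ker x z) 1 (1 + I) =
      ker x 1 *
        ∫ t in (0 : ℝ)..1, ψS (-1 / (t * I)) * (t * I) ^ 2 * ker x (t * I) * I := by
    rw [segInt, ← intervalIntegral.integral_const_mul, ← intervalIntegral.integral_const_mul]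
    congr 1
    funext t
    have e1 : (1 : ℂ) + t * (1 + I - 1) = 1 + t * I := by ring
    have e2 : (1 : ℂ) + t * I - 1 = t * I := by ring
    rw [e1, e2, ker_add]
    ring
  have s3 : segInt (fun z => ψS (-1 / z) * z ^ 2 * ker x z) 0 I =
      ∫ t in (0 : ℝ)..1, ψS (-1 / (t * I)) * (t * I) ^ 2 * ker x (t * I) * I := by
    rw [segInt, ← intervalIntegral.integral_const_mul]
    congr 1
    funext t
    simp only [sub_zero, zero_add]
    ring
  have s4 : segInt (fun z => ψS (-1 / (z + 1)) * (z + 1) ^ 2 * ker x z) (-1 + I) I =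
      ∫ u in (-1 : ℝ)..0, psiT (u + (1 : ℝ) * I) * ker x (u + (1 : ℝ) * I) := by
    have h := intervalIntegral.integral_comp_add_right (a := 0) (b := 1)
      (fun u : ℝ => psiT (u + (1 : ℝ) * I) * ker x (u + (1 : ℝ) * I)) (-1)
    norm_num at h
    norm_num
    rw [← h, segInt]
    have e1 : I - (-1 + I) = 1 := by ring
    rw [e1, one_mul]
    congr 1
    funext t
    have e2 : (-1 : ℂ) + I + t * 1 = t + -1 + I := by ring
    have him : 0 < ((t : ℂ) + -1 + I + 1).im := by simp
    rw [e2, psiS_S him, psiI_add_one]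
  have s5 : segInt (fun z => ψS (-1 / (z - 1)) * (z - 1) ^ 2 * ker x z) (1 + I) I =
      -∫ u in (0 : ℝ)..1, psiT (u + (1 : ℝ) * I) * ker x (u + (1 : ℝ) * I) := by
    have h := intervalIntegral.integral_comp_sub_left (a := 0) (b := 1)
      (fun u : ℝ => psiT (u + (1 : ℝ) * I) * ker x (u + (1 : ℝ) * I)) 1
    norm_num at h
    norm_num
    rw [← h, segInt]
    have e1 : I - (1 + I) = -1 := by ring
    rw [e1, neg_one_mul]
    congr 2
    funext t
    have e2 : (1 : ℂ) + I + t * -1 = 1 - t + I := by ring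
    have him : 0 < ((1 : ℂ) - t + I - 1).im := by simp
    rw [e2, psiS_S him, psiI_sub_one]
  rw [funB, s1, s2, s3, s4, s5, horiz, imAxisRayInt]
  ring

/-- The representation with the upper limit of integration truncated at height `R`. -/
lemma funB_eq_truncated {x : EuclideanSpace ℝ (Fin 8)} {R : ℝ} (hR : 1 ≤ R) :
    funB x = (ker x 1 + ker x (-1) - 2) *
        ((∫ t in (0 : ℝ)..1, ψS (-1 / (t * I)) * (t * I) ^ 2 * ker x (t * I) * I) +
          ∫ t in (1 : ℝ)..R, psiI (t * I) * ker x (t * I) * I) + horiz x R +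
      2 * ((∫ t in (1 : ℝ)..R, ψS (t * I) * ker x (t * I) * I) -
        ∫ t in Set.Ioi (1 : ℝ), ψS (t * I) * ker x (t * I) * I) := by
  have hi {f : ℂ → ℂ} (hf : ∀ z : ℂ, 1 ≤ z.im → DifferentiableAt ℂ f z) :
      IntervalIntegrable (fun t : ℝ => f (t * I) * ker x (t * I) * I) volume 1 R := by
    refine ContinuousOn.intervalIntegrable ?_
    rw [Set.uIcc_of_le hR]
    have h2 := (ker_differentiable x).continuous
    exact (((continuousOn_comp_mul_I hf).mono Set.Icc_subset_Ici_self).mul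
      (by fun_prop)).mul continuousOn_const
  have hsplit : (∫ t in (1 : ℝ)..R, psiI (t * I) * ker x (t * I) * I) =
      (∫ t in (1 : ℝ)..R, psiT (t * I) * ker x (t * I) * I) +
        ∫ t in (1 : ℝ)..R, ψS (t * I) * ker x (t * I) * I := by
    rw [← intervalIntegral.integral_add (hi fun z => psiT_differentiableAt)
      (hi fun z => psiS_differentiableAt)]
    congr 1
    funext t
    rw [psiI_eq]
    ring
  rw [funB_eq_horiz, horiz_one_eq x hR]
  linear_combination 2 * hsplit

lemma funB_repr_aux (x : EuclideanSpace ℝ (Fin 8)) (hx : 2 ≤ ‖x‖ ^ 2) :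
    funB x = -4 * (Real.sin (Real.pi * ‖x‖ ^ 2 / 2) : ℂ) ^ 2 *
      imAxisRayInt (fun z => ψS (-1 / z) * z ^ 2 * ker x z) 0 := by
  have hH := tendsto_horiz hx
  have hS := (((intervalIntegral_tendsto_integral_Ioi 1 (integrableOn_psiS_ker hx)
    tendsto_id).sub_const
      (∫ t in Set.Ioi (1 : ℝ), ψS (t * I) * ker x (t * I) * I)).const_mul 2)
  rw [sub_self, mul_zero] at hS
  rcases hx.eq_or_lt with h2 | h2
  -- In the first case the integral on the right diverges, but both sides vanish.
  · have hsin : (Real.sin (Real.pi * ‖x‖ ^ 2 / 2) : ℂ) = 0 := by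
      rw [← h2, mul_div_cancel_right₀ _ two_ne_zero, Real.sin_pi, Complex.ofReal_zero]
    have hc := ker_one_add_ker_neg_one x
    rw [hsin] at hc ⊢
    have h := hH.add hS
    rw [add_zero] at h
    have hb : Tendsto (fun _ : ℝ => funB x) atTop (𝓝 0) := by
      refine h.congr' ?_
      filter_upwards [eventually_ge_atTop (1 : ℝ)] with R hR
      rw [funB_eq_truncated hR, hc]
      simp
    rw [tendsto_nhds_unique tendsto_const_nhds hb]
    simp
  · have hI1 := integrableOn_psiI_ker h2
    have heq : Set.EqOn (fun t : ℝ => psiI (t * I) * ker x (t * I) * I)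
        (fun t : ℝ => ψS (-1 / (t * I)) * (t * I) ^ 2 * ker x (t * I) * I) (Set.Ioi 1) := by
      intro t ht
      have ht0 : 0 < ((t : ℂ) * I).im := by simpa using zero_lt_one.trans ht
      simp only [psiS_S ht0]
    have hI : imAxisRayInt (fun z => ψS (-1 / z) * z ^ 2 * ker x z) 0 =
        (∫ t in (0 : ℝ)..1, ψS (-1 / (t * I)) * (t * I) ^ 2 * ker x (t * I) * I) +
          ∫ t in Set.Ioi (1 : ℝ), psiI (t * I) * ker x (t * I) * I := by
      rw [setIntegral_congr_fun measurableSet_Ioi heq,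
        intervalIntegral.integral_of_le zero_le_one, imAxisRayInt,
        ← Set.Ioc_union_Ioi_eq_Ioi (zero_le_one (α := ℝ)),
        setIntegral_union (Set.Ioc_disjoint_Ioi le_rfl) measurableSet_Ioi
          (integrableOn_near_zero x) (hI1.congr_fun heq measurableSet_Ioi)]
    have h := ((((intervalIntegral_tendsto_integral_Ioi 1 hI1 tendsto_id).const_add
      (∫ t in (0 : ℝ)..1, ψS (-1 / (t * I)) * (t * I) ^ 2 * ker x (t * I) * I)).const_mul
        (ker x 1 + ker x (-1) - 2)).add hH).add hS
    rw [add_zero, add_zero, ← hI, ker_one_add_ker_neg_one] at h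
    have hb := h.congr' (f₂ := fun _ : ℝ => funB x) (by
      filter_upwards [eventually_ge_atTop (1 : ℝ)] with R hR
      rw [funB_eq_truncated hR, ker_one_add_ker_neg_one]
      rfl)
    exact tendsto_nhds_unique tendsto_const_nhds hb

/-- For `‖x‖ ≥ √2`, the function `b` is `-4 sin²(π‖x‖²/2)` times the integral of
`ψ_S(-1/z) z² e^{πi‖x‖²z}` along the positive imaginary axis; in particular `b` vanishes
(to order at least two) at every `x` with `‖x‖²` an even positive integer. -/
theorem funB_repr :
    (∀ x : EuclideanSpace ℝ (Fin 8), Real.sqrt 2 ≤ ‖x‖ →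
      funB x = -4 * (Real.sin (Real.pi * ‖x‖ ^ 2 / 2) : ℂ) ^ 2 *
        imAxisRayInt (fun z => ψS (-1 / z) * z ^ 2 * ker x z) 0) ∧
    (∀ x : EuclideanSpace ℝ (Fin 8), ∀ n : ℕ, 0 < n → ‖x‖ ^ 2 = 2 * (n : ℝ) →
      funB x = 0) := by
  have h1 : ∀ x : EuclideanSpace ℝ (Fin 8), Real.sqrt 2 ≤ ‖x‖ →
      funB x = -4 * (Real.sin (Real.pi * ‖x‖ ^ 2 / 2) : ℂ) ^ 2 *
        imAxisRayInt (fun z => ψS (-1 / z) * z ^ 2 * ker x z) 0 := fun x hx =>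
    funB_repr_aux x ((Real.sqrt_le_left (norm_nonneg x)).mp hx)
  refine ⟨h1, fun x n hn hx => ?_⟩
  have hn1 : (1 : ℝ) ≤ n := by exact_mod_cast hn
  have hsin : Real.sin (Real.pi * ‖x‖ ^ 2 / 2) = 0 := by
    rw [hx, ← Real.sin_nat_mul_pi n]
    ring_nf
  rw [funB_repr_aux x (by linarith), hsin]
  simp
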